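/- Let p be a prime, Δ a finite abelian p-group, and Λ = ℤ_p[Δ] the group algebra of Δ over the p-adic integers. Let M be a Λ-module that is finitely generated and free as a ℤ_p-module, and suppose there exists a surjective Λ-linear map Λ^n ↠ M. If for every prime ideal Q of Λ with p ∉ Q the module (M/QM) ⊗_{ℤ_p} ℚ_p is free of rank n over the ring (Λ/Q) ⊗_{ℤ_p} ℚ_p, then M is a free Λ-module of rank n. -/

import Mathlib

open TensorProduct
set_option synthInstance.maxHeartbeats 1000000
set_option maxHeartbeats 2000000

/-! A surjection from a free module of rank `n` becomes an isomorphism after any base change that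
makes its target free of rank `n`, because a surjective endomorphism of a finite module is
injective. Applied to the generic fibre over a minimal prime `Q`, this shows that the coordinates of
every kernel element lie in `Q`. The group algebra is reduced, so its minimal primes intersect in
zero and the kernel vanishes. Minimal primes have residue characteristic zero because they consist
of zero divisors, whereas `p` is regular. -/

/-- For an `R ⧸ I`-algebra `S`, base change of `M ⧸ IM` from `R ⧸ I` to `S` agrees with base change
of `M` from `R` to `S`. -/
noncomputable def tensorQuotSMulTopEquiv {R : Type*} (M S : Type*) [CommRing R] [AddCommGroup M]
    [Module R M] (I : Ideal R) [CommRing S] [Algebra R S] [Algebra (R ⧸ I) S]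
    [IsScalarTower R (R ⧸ I) S] :
    S ⊗[R ⧸ I] (M ⧸ (I • ⊤ : Submodule R M)) ≃ₗ[S] S ⊗[R] M :=
  AlgebraTensorModule.congr (.refl S S)
      ((quotTensorEquivQuotSMul M I).symm.extendScalarsOfSurjective Ideal.Quotient.mk_surjective)
    ≪≫ₗ AlgebraTensorModule.cancelBaseChange R (R ⧸ I) S S M

section BaseChange

variable {R M ι : Type*} [CommRing R] [AddCommGroup M] [Module R M] [Fintype ι]

theorem baseChange_injective_of_surjective_of_finrank_eq_card (S : Type*) [CommRing S]
    [Nontrivial S] [Algebra R S] {f : (ι → R) →ₗ[R] M} (hf : Function.Surjective f)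
    [Module.Free S (S ⊗[R] M)] (hrank : Module.finrank S (S ⊗[R] M) = Fintype.card ι) :
    Function.Injective (f.baseChange S) := by
  have hsurj : Function.Surjective (f.baseChange S) := LinearMap.lTensor_surjective S hf
  have : Module.Finite S (S ⊗[R] M) := .of_surjective _ hsurj
  have hrank' : Module.finrank S (S ⊗[R] (ι → R)) = Module.finrank S (S ⊗[R] M) := by
    classical
    rw [hrank, (TensorProduct.piScalarRight R S S ι).finrank_eq, Module.finrank_fintype_fun_eq_card]
  let e : S ⊗[R] (ι → R) ≃ₗ[S] S ⊗[R] M := LinearEquiv.ofFinrankEq _ _ hrank'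
  exact OrzechProperty.injective_of_surjective_of_injective e.toLinearMap _ e.injective hsurj

theorem algebraMap_apply_eq_zero_of_mem_ker_of_finrank_eq_card (S : Type*) [CommRing S]
    [Nontrivial S] [Algebra R S]
    {f : (ι → R) →ₗ[R] M} (hf : Function.Surjective f) [Module.Free S (S ⊗[R] M)]
    (hrank : Module.finrank S (S ⊗[R] M) = Fintype.card ι) {x : ι → R}
    (hx : x ∈ LinearMap.ker f) (i : ι) : algebraMap R S (x i) = 0 := by
  classical
  have htmul : (1 : S) ⊗ₜ[R] x = 0 :=
    (map_eq_zero_iff _ (baseChange_injective_of_surjective_of_finrank_eq_card S hf hrank)).mp <| by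
      rw [LinearMap.baseChange_tmul, LinearMap.mem_ker.mp hx, tmul_zero]
  simpa [Algebra.algebraMap_eq_smul_one] using
    congr_fun (congr_arg (TensorProduct.piScalarRight R S S ι) htmul) i

theorem apply_mem_of_mem_ker_of_finrank_eq_card {Q : Ideal R} {S : Type*} [CommRing S]
    [Nontrivial S] [Algebra R S] [Algebra (R ⧸ Q) S] [IsScalarTower R (R ⧸ Q) S]
    (hS : Function.Injective (algebraMap (R ⧸ Q) S))
    {f : (ι → R) →ₗ[R] M} (hf : Function.Surjective f)
    [Module.Free S (S ⊗[R ⧸ Q] (M ⧸ (Q • ⊤ : Submodule R M)))]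
    (hrank : Module.finrank S (S ⊗[R ⧸ Q] (M ⧸ (Q • ⊤ : Submodule R M))) = Fintype.card ι)
    {x : ι → R} (hx : x ∈ LinearMap.ker f) (i : ι) : x i ∈ Q := by
  let e := tensorQuotSMulTopEquiv M S Q
  have := Module.Free.of_equiv e
  have hzero : algebraMap R S (x i) = 0 :=
    algebraMap_apply_eq_zero_of_mem_ker_of_finrank_eq_card S hf
      (e.finrank_eq.symm.trans hrank) hx i
  rw [IsScalarTower.algebraMap_apply R (R ⧸ Q), map_eq_zero_iff _ hS] at hzero
  exact Ideal.Quotient.eq_zero_iff_mem.mp hzero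

end BaseChange

section TorsionFree

variable {O : Type*} [CommRing O]

theorem algebraMap_mem_nonZeroDivisors_of_isTorsionFree (A : Type*) [CommRing A] [Algebra O A]
    [Module.IsTorsionFree O A] {r : O} (hr : r ∈ nonZeroDivisors O) :
    algebraMap O A r ∈ nonZeroDivisors A := by
  refine mem_nonZeroDivisors_iff_right.mpr fun a ha ↦ ?_
  have hreg : IsRegular r := isRegular_iff_mem_nonZeroDivisors.mpr hr
  rw [mul_comm, ← Algebra.smul_def] at ha
  exact isSMulRegular_iff_right_eq_zero_of_smul.mp hreg.isSMulRegular a ha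

theorem algebraMap_tensorProduct_injective_of_isTorsionFree (A K : Type*) [CommRing A] [Algebra O A]
    [Module.IsTorsionFree O A] [CommRing K] [Algebra O K] [IsFractionRing O K] :
    Function.Injective (algebraMap A (A ⊗[O] K)) := by
  refine IsLocalization.injective (M := Algebra.algebraMapSubmonoid A (nonZeroDivisors O)) _ ?_
  rintro _ ⟨r, hr, rfl⟩
  exact algebraMap_mem_nonZeroDivisors_of_isTorsionFree A hr

variable {R : Type*} [CommRing R] [Algebra O R] [Module.IsTorsionFree O R] {Q : Ideal R}

theorem algebraMap_notMem_of_mem_minimalPrimes (hQ : Q ∈ minimalPrimes R) {r : O}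
    (hr : r ∈ nonZeroDivisors O) : algebraMap O R r ∉ Q := fun hrQ ↦
  Set.disjoint_left.mp (Ideal.disjoint_nonZeroDivisors_of_mem_minimalPrimes hQ) hrQ
    (algebraMap_mem_nonZeroDivisors_of_isTorsionFree R hr)

theorem isTorsionFree_quotient_of_mem_minimalPrimes (hQ : Q ∈ minimalPrimes R) :
    Module.IsTorsionFree O (R ⧸ Q) where
  isSMulRegular r hr := by
    have := hQ.isPrime
    have hrQ := algebraMap_notMem_of_mem_minimalPrimes hQ hr.mem_nonZeroDivisors
    refine isSMulRegular_iff_right_eq_zero_of_smul.mpr fun a ha ↦ ?_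
    rw [Algebra.smul_def, IsScalarTower.algebraMap_apply O R] at ha
    exact (mul_eq_zero.mp ha).resolve_left (mt Ideal.Quotient.eq_zero_iff_mem.mp hrQ)

end TorsionFree

theorem isReduced_monoidAlgebra (R G : Type*) [CommRing R] [IsDomain R] [CommGroup G] [Finite G]
    [NeZero (Nat.card G : R)] : IsReduced (MonoidAlgebra R G) := by
  have hinj := IsFractionRing.injective R (FractionRing R)
  have : NeZero (Nat.card G : FractionRing R) :=
    ⟨by simpa using (map_ne_zero_iff _ hinj).mpr (NeZero.ne (Nat.card G : R))⟩
  -- Maschke's theorem makes the group algebra over the fraction field semisimple, hence reduced.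
  exact isReduced_of_injective (MonoidAlgebra.mapRingHom G (algebraMap R (FractionRing R)))
    (MonoidAlgebra.map_injective _ hinj)

theorem free_of_generic_fibers_free_general (O K : Type*) [CommRing O] [CommRing K] [Algebra O K]
    [IsFractionRing O K] {R M ι : Type*} [CommRing R] [IsReduced R] [Algebra O R]
    [Module.IsTorsionFree O R] [AddCommGroup M] [Module R M] [Fintype ι]
    (f : (ι → R) →ₗ[R] M) (hf : Function.Surjective f)
    (hfree : ∀ Q ∈ minimalPrimes R,
      Module.Free ((R ⧸ Q) ⊗[O] K)
        (((R ⧸ Q) ⊗[O] K) ⊗[R ⧸ Q] (M ⧸ (Q • ⊤ : Submodule R M))) ∧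
      Module.finrank ((R ⧸ Q) ⊗[O] K)
        (((R ⧸ Q) ⊗[O] K) ⊗[R ⧸ Q] (M ⧸ (Q • ⊤ : Submodule R M))) = Fintype.card ι) :
    Nonempty (M ≃ₗ[R] (ι → R)) := by
  have hmem {x : ι → R} (hx : x ∈ LinearMap.ker f) (i : ι) (Q : Ideal R)
      (hQ : Q ∈ minimalPrimes R) : x i ∈ Q := by
    have := hQ.isPrime
    have := isTorsionFree_quotient_of_mem_minimalPrimes (O := O) hQ
    have hinj := algebraMap_tensorProduct_injective_of_isTorsionFree (O := O) (R ⧸ Q) K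
    have := hinj.nontrivial
    obtain ⟨_, hrank⟩ := hfree Q hQ
    exact apply_mem_of_mem_ker_of_finrank_eq_card hinj hf hrank hx i
  have hker : LinearMap.ker f = ⊥ := (Submodule.eq_bot_iff _).mpr fun x hx ↦ funext fun i ↦ by
    have hnil : x i ∈ sInf (minimalPrimes R) := Ideal.mem_sInf.mpr fun {Q} hQ ↦ hmem hx i Q hQ
    rw [minimalPrimes, Ideal.sInf_minimalPrimes] at hnil
    exact (mem_nilradical.mp hnil).eq_zero
  exact ⟨(LinearEquiv.ofBijective f ⟨LinearMap.ker_eq_bot.mp hker, hf⟩).symm⟩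

/-- Let `Λ = ℤ_p[Δ]` for a finite abelian `p`-group `Δ`, and let `M` be a
`Λ`-module, finitely generated and free over `ℤ_p`, admitting a `Λ`-linear surjection
`Λ^n ↠ M`.  If for every prime ideal `Q` of `Λ` with `p ∉ Q` the module
`(M/QM) ⊗_{ℤ_p} ℚ_p` (realized as the base change of `M/QM` to `(Λ/Q) ⊗_{ℤ_p} ℚ_p`)
is free of rank `n` over `(Λ/Q) ⊗_{ℤ_p} ℚ_p`, then `M` is a free `Λ`-module of rank `n`. -/
theorem free_of_generic_fibers_free (p : ℕ) [Fact p.Prime]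
    (Δ : Type*) [CommGroup Δ] [Finite Δ] (hΔ : IsPGroup p Δ)
    (M : Type*) [AddCommGroup M] [Module (MonoidAlgebra ℤ_[p] Δ) M]
    [Module ℤ_[p] M] [IsScalarTower ℤ_[p] (MonoidAlgebra ℤ_[p] Δ) M]
    [Module.Finite ℤ_[p] M] [Module.Free ℤ_[p] M] (n : ℕ)
    (f : (Fin n → MonoidAlgebra ℤ_[p] Δ) →ₗ[MonoidAlgebra ℤ_[p] Δ] M)
    (hf : Function.Surjective f)
    (hfree : ∀ Q : Ideal (MonoidAlgebra ℤ_[p] Δ), Q.IsPrime →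
      (p : MonoidAlgebra ℤ_[p] Δ) ∉ Q →
      Module.Free ((MonoidAlgebra ℤ_[p] Δ ⧸ Q) ⊗[ℤ_[p]] ℚ_[p])
        (((MonoidAlgebra ℤ_[p] Δ ⧸ Q) ⊗[ℤ_[p]] ℚ_[p]) ⊗[MonoidAlgebra ℤ_[p] Δ ⧸ Q]
          (M ⧸ (Q • ⊤ : Submodule (MonoidAlgebra ℤ_[p] Δ) M))) ∧
      Module.finrank ((MonoidAlgebra ℤ_[p] Δ ⧸ Q) ⊗[ℤ_[p]] ℚ_[p])
        (((MonoidAlgebra ℤ_[p] Δ ⧸ Q) ⊗[ℤ_[p]] ℚ_[p]) ⊗[MonoidAlgebra ℤ_[p] Δ ⧸ Q]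
          (M ⧸ (Q • ⊤ : Submodule (MonoidAlgebra ℤ_[p] Δ) M))) = n) :
    Nonempty (M ≃ₗ[MonoidAlgebra ℤ_[p] Δ] (Fin n → MonoidAlgebra ℤ_[p] Δ)) := by
  have : NeZero (Nat.card Δ : ℤ_[p]) := ⟨Nat.cast_ne_zero.mpr Nat.card_pos.ne'⟩
  have := isReduced_monoidAlgebra ℤ_[p] Δ
  refine free_of_generic_fibers_free_general ℤ_[p] ℚ_[p] f hf fun Q hQ ↦ ?_
  have hpQ : algebraMap ℤ_[p] (MonoidAlgebra ℤ_[p] Δ) p ∉ Q :=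
    algebraMap_notMem_of_mem_minimalPrimes hQ
      (mem_nonZeroDivisors_of_ne_zero PadicInt.prime_p.ne_zero)
  rw [map_natCast] at hpQ
  simpa only [Fintype.card_fin] using hfree Q hQ.isPrime hpQ
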